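/- arXiv:2510.21503 — 4 statements merged into one kernel-verified Lean document; each statement's English description precedes it below -/
import Mathlib

section
/- Let X₁, …, X_d ∈ Matrix (Fin N) (Fin N) ℂ be linearly independent with Gram matrix Γ_{i j} := Tr(X_iᴴ * X_j) with respect to the Frobenius inner product, and let (e_k)_{k ∈ Fin d} be any family in the span S of {X₁, …, X_d} that is orthonormal for the Frobenius inner product and spans S. Then for every x ∈ Matrix (Fin N) (Fin N) ℂ: Σ_k e_k * x * e_kᴴ = Σ_{i,j} (Γ⁻¹)_{i j} • (X_i * x * X_jᴴ). -/
open Matrix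

/-- For a linearly independent family `X` with Frobenius Gram matrix `Γ` and any
orthonormal spanning family `e` of the span of `X`, the quantum adjacency map
`x ↦ ∑ k, e k * x * (e k)ᴴ` is given by `∑ i j, (Γ⁻¹ i j) • (X i * x * (X j)ᴴ)`. -/
theorem stmt_6 {N d : ℕ} (X e : Fin d → Matrix (Fin N) (Fin N) ℂ)
    (hX : LinearIndependent ℂ X)
    (Γ : Matrix (Fin d) (Fin d) ℂ)
    (hΓ : ∀ i j, Γ i j = ((X i)ᴴ * X j).trace)
    (he_mem : ∀ k, e k ∈ Submodule.span ℂ (Set.range X))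
    (he_on : ∀ k l, ((e k)ᴴ * e l).trace = if k = l then 1 else 0)
    (he_span : Submodule.span ℂ (Set.range e) = Submodule.span ℂ (Set.range X)) :
    ∀ x : Matrix (Fin N) (Fin N) ℂ,
      ∑ k, e k * x * (e k)ᴴ = ∑ i, ∑ j, (Γ⁻¹ i j) • (X i * x * (X j)ᴴ) := by
  intro x
  have h1 : ∀ k, ∃ c : Fin d → ℂ, ∑ i, c i • X i = e k := fun k =>
    (Submodule.mem_span_range_iff_exists_fun ℂ).1 (he_mem k)
  choose c hc using h1
  let C : Matrix (Fin d) (Fin d) ℂ := Matrix.of fun i k => c k i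
  have h2 : Cᴴ * (Γ * C) = 1 := by
    ext k l
    rw [Matrix.one_apply, ← he_on k l, ← hc k, ← hc l]
    simp only [Matrix.mul_apply (M := Cᴴ), Matrix.mul_apply (M := Γ),
      Matrix.conjTranspose_sum, Matrix.conjTranspose_smul, Finset.sum_mul,
      Finset.mul_sum, Matrix.trace_sum, Matrix.smul_mul, Matrix.mul_smul,
      Matrix.trace_smul, smul_eq_mul, hΓ]
    rw [Finset.sum_comm]
    refine Finset.sum_congr rfl fun i _ => Finset.sum_congr rfl fun j _ => ?_
    simp only [C, Matrix.conjTranspose_apply, Matrix.of_apply]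
    ring
  have h3 : Γ⁻¹ = C * Cᴴ := by
    apply Matrix.inv_eq_right_inv
    rw [← Matrix.mul_assoc]
    exact _root_.mul_eq_one_comm.1 h2
  have h4 : ∀ k, e k * x * (e k)ᴴ
      = ∑ i, ∑ j, (c k i * star (c k j)) • (X i * x * (X j)ᴴ) := by
    intro k
    rw [← hc k]
    simp only [Matrix.conjTranspose_sum, Matrix.conjTranspose_smul, Finset.sum_mul,
      Finset.mul_sum, Matrix.smul_mul, Matrix.mul_smul, smul_smul]
    rw [Finset.sum_comm]
    refine Finset.sum_congr rfl fun i _ => Finset.sum_congr rfl fun j _ => ?_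
    rw [mul_comm]
  simp only [h4, h3, Matrix.mul_apply (M := C), Finset.sum_smul]
  rw [Finset.sum_comm]
  refine Finset.sum_congr rfl fun i _ => ?_
  rw [Finset.sum_comm]
  rfl
end

section
/- Let S be a linear subspace of Matrix (Fin N) (Fin N) ℂ and let (e_k)_{k ∈ Fin d} and (f_k)_{k ∈ Fin d} be two families in S, each orthonormal with respect to the Frobenius inner product and each spanning S. Then for every x ∈ Matrix (Fin N) (Fin N) ℂ: Σ_k e_k * x * e_kᴴ = Σ_k f_k * x * f_kᴴ. -/
open Matrix

theorem expand_aux {N d : ℕ} (g : Fin d → Matrix (Fin N) (Fin N) ℂ)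
    (hg : ∀ k l, ((g k)ᴴ * g l).trace = if k = l then 1 else 0)
    (a : Matrix (Fin N) (Fin N) ℂ) (ha : a ∈ Submodule.span ℂ (Set.range g)) :
    a = ∑ l, ((g l)ᴴ * a).trace • g l := by
  obtain ⟨c, rfl⟩ := (Submodule.mem_span_range_iff_exists_fun ℂ).1 ha
  refine Finset.sum_congr rfl fun l _ => ?_
  congr 1
  simp [Matrix.mul_sum, Matrix.trace_sum, hg]

/-- The quantum adjacency map `x ↦ ∑ k, e k * x * (e k)ᴴ` attached to a subspace
`S` of matrices does not depend on the chosen Frobenius-orthonormal spanning family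
of `S`. -/
theorem stmt_7 {N d : ℕ} (S : Submodule ℂ (Matrix (Fin N) (Fin N) ℂ))
    (e f : Fin d → Matrix (Fin N) (Fin N) ℂ)
    (he_mem : ∀ k, e k ∈ S) (hf_mem : ∀ k, f k ∈ S)
    (he_on : ∀ k l, ((e k)ᴴ * e l).trace = if k = l then 1 else 0)
    (hf_on : ∀ k l, ((f k)ᴴ * f l).trace = if k = l then 1 else 0)
    (he_span : Submodule.span ℂ (Set.range e) = S)
    (hf_span : Submodule.span ℂ (Set.range f) = S) :
    ∀ x : Matrix (Fin N) (Fin N) ℂ,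
      ∑ k, e k * x * (e k)ᴴ = ∑ k, f k * x * (f k)ᴴ := by
  intro x
  have h1 : ∀ k, e k * x * (e k)ᴴ = ∑ l, ((e k)ᴴ * f l).trace • (e k * x * (f l)ᴴ) := by
    intro k
    have h := expand_aux f hf_on (e k) (hf_span ▸ he_mem k)
    have h' : (e k)ᴴ = ∑ l, ((e k)ᴴ * f l).trace • (f l)ᴴ := by
      conv_lhs => rw [h]
      rw [Matrix.conjTranspose_sum]
      refine Finset.sum_congr rfl fun l _ => ?_
      rw [Matrix.conjTranspose_smul, ← Matrix.trace_conjTranspose,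
        Matrix.conjTranspose_mul, Matrix.conjTranspose_conjTranspose]
    conv_lhs => rw [h']
    simp [Matrix.mul_sum]
  have h2 : ∀ l, f l * x * (f l)ᴴ = ∑ k, ((e k)ᴴ * f l).trace • (e k * x * (f l)ᴴ) := by
    intro l
    have h := expand_aux e he_on (f l) (he_span ▸ hf_mem l)
    have h' : f l * (x * (f l)ᴴ)
        = (∑ k, ((e k)ᴴ * f l).trace • e k) * (x * (f l)ᴴ) := by rw [← h]
    rw [Matrix.mul_assoc, h', Matrix.sum_mul]
    simp [Matrix.mul_assoc]
  simp_rw [h2]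
  rw [Finset.sum_comm]
  exact Finset.sum_congr rfl fun k _ => h1 k
end

section
/- Let S be a linear subspace of Matrix (Fin N) (Fin N) ℂ that is closed under conjugate transpose (x ∈ S → xᴴ ∈ S), and let (X_k)_{k ∈ Fin d} be a family in S orthonormal with respect to the Frobenius inner product and spanning S. Then for every x ∈ Matrix (Fin N) (Fin N) ℂ: Σ_k X_k * x * X_kᴴ = Σ_k X_kᴴ * x * X_k. Consequently the map A(x) := Σ_k X_k * x * X_kᴴ is self-adjoint with respect to the Frobenius inner product: Tr(A(x)ᴴ * y) = Tr(xᴴ * A(y)) for all x, y. -/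
open Matrix

/-- For a subspace `S ≤ Mₙ(ℂ)` closed under conjugate transpose and a
Frobenius-orthonormal spanning family `X` of `S`, the quantum adjacency map
`A(x) = ∑ k, X k * x * (X k)ᴴ` equals `x ↦ ∑ k, (X k)ᴴ * x * X k`, and is
self-adjoint for the Frobenius inner product. -/
theorem stmt_10 {N d : ℕ} (S : Submodule ℂ (Matrix (Fin N) (Fin N) ℂ))
    (hS : ∀ x ∈ S, xᴴ ∈ S)
    (X : Fin d → Matrix (Fin N) (Fin N) ℂ)
    (hmem : ∀ k, X k ∈ S)
    (hon : ∀ k l, ((X k)ᴴ * X l).trace = if k = l then 1 else 0)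
    (hspan : Submodule.span ℂ (Set.range X) = S) :
    (∀ x : Matrix (Fin N) (Fin N) ℂ,
        ∑ k, X k * x * (X k)ᴴ = ∑ k, (X k)ᴴ * x * X k) ∧
    (∀ x y : Matrix (Fin N) (Fin N) ℂ,
        ((∑ k, X k * x * (X k)ᴴ)ᴴ * y).trace =
          (xᴴ * ∑ k, X k * y * (X k)ᴴ).trace) := by
  have hexp : ∀ y ∈ S, y = ∑ l, ((X l)ᴴ * y).trace • X l := by
    intro y hy
    rw [← hspan] at hy
    obtain ⟨c, rfl⟩ := (Submodule.mem_span_range_iff_exists_fun ℂ).1 hy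
    refine Finset.sum_congr rfl fun l _ => ?_
    congr 1
    simp [Matrix.mul_sum, Matrix.trace_sum, hon]
  have h1 : ∀ x : Matrix (Fin N) (Fin N) ℂ,
      ∑ k, X k * x * (X k)ᴴ = ∑ k, (X k)ᴴ * x * X k := by
    intro x
    have e1 : ∀ k, X k * x * (X k)ᴴ
        = ∑ l, ((X l)ᴴ * (X k)ᴴ).trace • (X k * x * X l) := by
      intro k
      conv_lhs => rw [hexp _ (hS _ (hmem k))]
      simp [Matrix.mul_sum]
    have e2 : ∀ l, (X l)ᴴ * x * X l
        = ∑ k, ((X l)ᴴ * (X k)ᴴ).trace • (X k * x * X l) := by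
      intro l
      conv_lhs => rw [hexp _ (hS _ (hmem l))]
      simp only [Matrix.sum_mul, Matrix.smul_mul]
      refine Finset.sum_congr rfl fun k _ => ?_
      rw [Matrix.trace_mul_comm]
    rw [Finset.sum_congr rfl fun k _ => e1 k, Finset.sum_congr rfl fun k _ => e2 k,
      Finset.sum_comm]
  refine ⟨h1, fun x y => ?_⟩
  rw [h1 y, Matrix.conjTranspose_sum, Matrix.sum_mul, Matrix.mul_sum, Matrix.trace_sum,
    Matrix.trace_sum]
  refine Finset.sum_congr rfl fun k _ => ?_
  simp only [Matrix.conjTranspose_mul, Matrix.conjTranspose_conjTranspose, Matrix.mul_assoc]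
  rw [Matrix.trace_mul_comm]
  simp only [Matrix.mul_assoc]
end

section
/- Let S be a linear subspace of Matrix (Fin n) (Fin n) ℂ containing the identity matrix 1 and closed under conjugate transpose. Define the reflexive complement S^⊥ := ℂ•1 ⊔ ((S ⊓ {1}ᗮ)ᗮ ⊓ {1}ᗮ), where ᗮ denotes orthogonal complement with respect to the Frobenius inner product and ⊔, ⊓ denote sum and intersection of subspaces. Then: (i) 1 ∈ S^⊥; (ii) S^⊥ is closed under conjugate transpose; (iii) dim S^⊥ = n² − dim S + 1; (iv) (S^⊥)^⊥ = S. -/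
open Matrix

/-- The orthogonal complement of a subspace of `Mₙ(ℂ)` with respect to the Frobenius
inner product `⟨a, b⟩ = Tr(aᴴ * b)`. -/
noncomputable def frobPerp {n : ℕ} (S : Submodule ℂ (Matrix (Fin n) (Fin n) ℂ)) :
    Submodule ℂ (Matrix (Fin n) (Fin n) ℂ) :=
  ⨅ b ∈ (S : Set (Matrix (Fin n) (Fin n) ℂ)),
    LinearMap.ker ((Matrix.traceLinearMap (Fin n) ℂ ℂ) ∘ₗ (LinearMap.mulLeft ℂ bᴴ))

/-- The reflexive complement of an operator system `S ≤ Mₙ(ℂ)`: take the traceless part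
of `S`, then the orthogonal complement inside the traceless matrices, then add the unit. -/
noncomputable def reflCompl {n : ℕ} (S : Submodule ℂ (Matrix (Fin n) (Fin n) ℂ)) :
    Submodule ℂ (Matrix (Fin n) (Fin n) ℂ) :=
  Submodule.span ℂ {(1 : Matrix (Fin n) (Fin n) ℂ)} ⊔
    (frobPerp (S ⊓ frobPerp (Submodule.span ℂ {(1 : Matrix (Fin n) (Fin n) ℂ)})) ⊓
      frobPerp (Submodule.span ℂ {(1 : Matrix (Fin n) (Fin n) ℂ)}))

theorem mem_frobPerp {n : ℕ} {S : Submodule ℂ (Matrix (Fin n) (Fin n) ℂ)}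
    {x : Matrix (Fin n) (Fin n) ℂ} :
    x ∈ frobPerp S ↔ ∀ b ∈ S, (bᴴ * x).trace = 0 := by
  simp [frobPerp, Submodule.mem_iInf]

/-- Vectorisation of matrices. -/
noncomputable def vecE (n : ℕ) :
    Matrix (Fin n) (Fin n) ℂ ≃ₗ[ℂ] EuclideanSpace ℂ (Fin n × Fin n) :=
  (LinearEquiv.curry ℂ ℂ (Fin n) (Fin n)).symm.trans
    (WithLp.linearEquiv 2 ℂ (Fin n × Fin n → ℂ)).symm

theorem inner_vecE {n : ℕ} (a b : Matrix (Fin n) (Fin n) ℂ) :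
    inner ℂ (vecE n a) (vecE n b) = (aᴴ * b).trace := by
  have h : ∀ (c : Matrix (Fin n) (Fin n) ℂ) (p : Fin n × Fin n), vecE n c p = c p.1 p.2 :=
    fun c p => rfl
  simp only [PiLp.inner_apply, h, Matrix.trace, Matrix.diag, Matrix.mul_apply,
    Matrix.conjTranspose_apply, Fintype.sum_prod_type, RCLike.inner_apply]
  rw [Finset.sum_comm]
  simp [mul_comm]

theorem frobPerp_eq {n : ℕ} (S : Submodule ℂ (Matrix (Fin n) (Fin n) ℂ)) :
    (frobPerp S).map (vecE n).toLinearMap = (S.map (vecE n).toLinearMap)ᗮ := by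
  ext y
  obtain ⟨x, rfl⟩ := (vecE n).surjective y
  rw [Submodule.mem_orthogonal]
  rw [(vecE n).surjective.forall]
  simp [mem_frobPerp, inner_vecE]

theorem isCompl_frobPerp {n : ℕ} (S : Submodule ℂ (Matrix (Fin n) (Fin n) ℂ)) :
    IsCompl S (frobPerp S) := by
  have h := Submodule.isCompl_orthogonal
    (K := S.map (vecE n).toLinearMap)
  rw [← frobPerp_eq] at h
  exact (OrderIso.isCompl_iff (Submodule.orderIsoMapComap (vecE n))).2 h

theorem frobPerp_frobPerp {n : ℕ} (S : Submodule ℂ (Matrix (Fin n) (Fin n) ℂ)) :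
    frobPerp (frobPerp S) = S := by
  apply Submodule.map_injective_of_injective (f := (vecE n).toLinearMap) (vecE n).injective
  rw [frobPerp_eq, frobPerp_eq, Submodule.orthogonal_orthogonal]

theorem frobPerp_sup {n : ℕ} (S T : Submodule ℂ (Matrix (Fin n) (Fin n) ℂ)) :
    frobPerp (S ⊔ T) = frobPerp S ⊓ frobPerp T := by
  apply Submodule.map_injective_of_injective (f := (vecE n).toLinearMap) (vecE n).injective
  rw [Submodule.map_inf _ (vecE n).injective, frobPerp_eq, frobPerp_eq, frobPerp_eq,
    Submodule.map_sup, Submodule.inf_orthogonal]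

theorem sup_inf_frobPerp {n : ℕ} {U S : Submodule ℂ (Matrix (Fin n) (Fin n) ℂ)}
    (h : U ≤ S) : U ⊔ (S ⊓ frobPerp U) = S := by
  rw [inf_comm, ← sup_inf_assoc_of_le _ h, (isCompl_frobPerp U).sup_eq_top, top_inf_eq]

theorem reflCompl_eq {n : ℕ} {S : Submodule ℂ (Matrix (Fin n) (Fin n) ℂ)}
    (h1 : (1 : Matrix (Fin n) (Fin n) ℂ) ∈ S) :
    reflCompl S = Submodule.span ℂ {(1 : Matrix (Fin n) (Fin n) ℂ)} ⊔ frobPerp S := by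
  have hU : Submodule.span ℂ {(1 : Matrix (Fin n) (Fin n) ℂ)} ≤ S := by
    simpa [Submodule.span_le] using h1
  rw [reflCompl, ← frobPerp_sup, sup_comm (S ⊓ _), sup_inf_frobPerp hU]

theorem star_frobPerp {n : ℕ} {S : Submodule ℂ (Matrix (Fin n) (Fin n) ℂ)}
    (hsa : ∀ x ∈ S, xᴴ ∈ S) : ∀ x ∈ frobPerp S, xᴴ ∈ frobPerp S := by
  intro x hx
  rw [mem_frobPerp] at hx ⊢
  intro b hb
  have := hx _ (hsa b hb)
  rw [Matrix.conjTranspose_conjTranspose, Matrix.trace_mul_comm] at this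
  rw [← Matrix.conjTranspose_mul, Matrix.trace_conjTranspose, this, star_zero]

/-- The reflexive complement of an operator system is again an operator system, has
dimension `n² − dim S + 1`, and taking it twice recovers `S`. -/
theorem stmt_13 {n : ℕ} (hn : 0 < n) (S : Submodule ℂ (Matrix (Fin n) (Fin n) ℂ))
    (h1 : (1 : Matrix (Fin n) (Fin n) ℂ) ∈ S)
    (hsa : ∀ x ∈ S, xᴴ ∈ S) :
    (1 : Matrix (Fin n) (Fin n) ℂ) ∈ reflCompl S ∧
    (∀ x ∈ reflCompl S, xᴴ ∈ reflCompl S) ∧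
    Module.finrank ℂ (reflCompl S) = n ^ 2 - Module.finrank ℂ S + 1 ∧
    reflCompl (reflCompl S) = S := by
  have hU : Submodule.span ℂ {(1 : Matrix (Fin n) (Fin n) ℂ)} ≤ S := by
    simpa [Submodule.span_le] using h1
  have h1U : (1 : Matrix (Fin n) (Fin n) ℂ) ∈
      Submodule.span ℂ {(1 : Matrix (Fin n) (Fin n) ℂ)} := Submodule.mem_span_singleton_self 1
  have h1R : (1 : Matrix (Fin n) (Fin n) ℂ) ∈ reflCompl S := by
    rw [reflCompl_eq h1]
    exact Submodule.mem_sup_left h1U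
  refine ⟨h1R, ?_, ?_, ?_⟩
  · rw [reflCompl_eq h1]
    intro x hx
    obtain ⟨u, hu, v, hv, rfl⟩ := Submodule.mem_sup.1 hx
    obtain ⟨c, rfl⟩ := Submodule.mem_span_singleton.1 hu
    rw [Matrix.conjTranspose_add, Matrix.conjTranspose_smul, Matrix.conjTranspose_one]
    exact Submodule.add_mem_sup (Submodule.smul_mem _ _ h1U) (star_frobPerp hsa v hv)
  · have : Nonempty (Fin n) := ⟨⟨0, hn⟩⟩
    have ha := Submodule.finrank_sup_add_finrank_inf_eq
      (Submodule.span ℂ {(1 : Matrix (Fin n) (Fin n) ℂ)}) (frobPerp S)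
    have hd := ((isCompl_frobPerp S).disjoint.mono_left hU).eq_bot
    have hc := Submodule.finrank_add_eq_of_isCompl (isCompl_frobPerp S)
    rw [hd, finrank_bot, finrank_span_singleton one_ne_zero] at ha
    rw [Module.finrank_matrix] at hc
    simp only [Fintype.card_fin, Module.finrank_self, mul_one] at hc
    rw [reflCompl_eq h1, pow_two]
    omega
  · rw [reflCompl_eq h1R, reflCompl_eq h1, frobPerp_sup, frobPerp_frobPerp, inf_comm,
      sup_inf_frobPerp hU]
end
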